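/- A morphism f : X → Y of undirected graphs is a covering (i.e., for every node x of X, f₁ restricts to a bijection from {u ∈ X₁ : s(u) = x} onto {v ∈ Y₁ : s(v) = f₀(x)}) if and only if f has the right lifting property with respect to both the elementary folding V_U → A_U and the node inclusion D_U → A_U. -/

import Mathlib

open CategoryTheory

namespace Paper

/-- An undirected graph: a set of nodes, a set of half-arcs, source and target maps
and an involution `i` on half-arcs with `s ∘ i = t`. -/
structure UGraph : Type 1 where
  nodes : Type
  half : Type
  s : half → nodes
  t : half → nodes
  inv : half → half
  inv_inv : ∀ a, inv (inv a) = a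
  s_inv : ∀ a, s (inv a) = t a

/-- A morphism of undirected graphs: maps on nodes and half-arcs commuting with
source, target and the involution. -/
@[ext]
structure UGraph.Hom (X Y : UGraph) where
  f0 : X.nodes → Y.nodes
  f1 : X.half → Y.half
  comm_s : ∀ a, Y.s (f1 a) = f0 (X.s a)
  comm_t : ∀ a, Y.t (f1 a) = f0 (X.t a)
  comm_inv : ∀ a, Y.inv (f1 a) = f1 (X.inv a)

/-- The category of undirected graphs. -/
instance : Category UGraph where
  Hom := UGraph.Hom
  id X := ⟨id, id, fun _ => rfl, fun _ => rfl, fun _ => rfl⟩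
  comp f g := ⟨g.f0 ∘ f.f0, g.f1 ∘ f.f1,
    fun a => by simp [Function.comp, g.comm_s, f.comm_s],
    fun a => by simp [Function.comp, g.comm_t, f.comm_t],
    fun a => by simp [Function.comp, g.comm_inv, f.comm_inv]⟩

@[simp] theorem UGraph.comp_f0 {X Y Z : UGraph} (f : X ⟶ Y) (g : Y ⟶ Z) :
    (f ≫ g).f0 = g.f0 ∘ f.f0 := rfl

@[simp] theorem UGraph.comp_f1 {X Y Z : UGraph} (f : X ⟶ Y) (g : Y ⟶ Z) :
    (f ≫ g).f1 = g.f1 ∘ f.f1 := rfl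

/-- two nodes are adjacent if some half-arc goes from one to the other. -/
def UGraph.adj (X : UGraph) (x y : X.nodes) : Prop :=
  ∃ u : X.half, X.s u = x ∧ X.t u = y

/-- An undirected graph is connected if any two nodes are joined by a finite
sequence of consecutively incident half-arcs. -/
def UGraph.Connected (X : UGraph) : Prop :=
  ∀ x y : X.nodes, Relation.ReflTransGen X.adj x y

/-- The undirected `p`-cycle `c^p_U` : nodes `ℤ/pℤ`, half-arcs `[n]⁺ = (n, true)`
and `[n]⁻ = (n, false)` with `s [n]⁺ = [n]`, `t [n]⁺ = [n+1]`, `i [n]⁺ = [n]⁻`. -/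
def cycleU (p : ℕ) : UGraph where
  nodes := ZMod p
  half := ZMod p × Bool
  s a := if a.2 then a.1 else a.1 + 1
  t a := if a.2 then a.1 + 1 else a.1
  inv a := (a.1, !a.2)
  inv_inv a := by simp
  s_inv a := by rcases a with ⟨n, _ | _⟩ <;> simp

/-- A `p`-cycle `h : c^p_U ⟶ X` is backtrack-free if `h₁([n+1]⁺) ≠ h₁([n]⁻)` for
all `n`. -/
def BFree {p : ℕ} {X : UGraph} (h : cycleU p ⟶ X) : Prop :=
  ∀ n : ZMod p, h.f1 (n + 1, true) ≠ h.f1 (n, false)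

/-- A morphism of undirected graphs is a covering if it restricts to a bijection on
the half-arcs issued from each node. -/
def IsCovering {X Y : UGraph} (f : X ⟶ Y) : Prop :=
  ∀ x : X.nodes,
    Function.Bijective (fun u : {u : X.half // X.s u = x} =>
      (⟨f.f1 u.1, by rw [f.comm_s, u.2]⟩ : {v : Y.half // Y.s v = f.f0 x}))

end Paper

namespace Paper

/-- The dot graph `D_U` : one node, no half-arcs. -/
def DU : UGraph where
  nodes := Unit
  half := Empty
  s a := a.elim
  t a := a.elim
  inv a := a.elim
  inv_inv a := a.elim
  s_inv a := a.elim

/-- The arc graph `A_U` : nodes `u₁ = false`, `u₂ = true`, half-arcs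
`a₁ = false`, `a₂ = true` with `s a₁ = u₁`, `t a₁ = u₂`, `i a₁ = a₂`. -/
def AU : UGraph where
  nodes := Bool
  half := Bool
  s a := a
  t a := !a
  inv a := !a
  inv_inv a := by simp
  s_inv a := rfl

/-- The graph `V_U` : nodes `v₁ = 0`, `v₂ = 1`, `v₃ = 2`, half-arcs
`b₁ = (0, true)`, `b₂ = (0, false)`, `c₁ = (1, true)`, `c₂ = (1, false)` with
`s b₁ = s c₁ = v₁`, `t b₁ = v₂`, `t c₁ = v₃`, `i b₁ = b₂`, `i c₁ = c₂`. -/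
def VU : UGraph where
  nodes := Fin 3
  half := Fin 2 × Bool
  s a := if a.2 then 0 else a.1.succ
  t a := if a.2 then a.1.succ else 0
  inv a := (a.1, !a.2)
  inv_inv a := by simp
  s_inv a := by rcases a with ⟨j, _ | _⟩ <;> simp

/-- The node component of the elementary folding. -/
def foldNode : Fin 3 → Bool := fun x => decide (x ≠ 0)

/-- The elementary folding `V_U ⟶ A_U` : `v₁ ↦ u₁`, `v₂, v₃ ↦ u₂`,
`b₁, c₁ ↦ a₁`, `b₂, c₂ ↦ a₂`. -/
def folding : VU ⟶ AU where
  f0 := foldNode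
  f1 a := !a.2
  comm_s a := by
    rcases a with ⟨j, _ | _⟩ <;>
      simp [AU, VU, foldNode, Fin.succ_ne_zero]
  comm_t a := by
    rcases a with ⟨j, _ | _⟩ <;>
      simp [AU, VU, foldNode, Fin.succ_ne_zero]
  comm_inv a := by rcases a with ⟨j, _ | _⟩ <;> simp [AU, VU, foldNode]

/-- The node inclusion `D_U ⟶ A_U` sending the node of `D_U` to `u₁`. -/
def nodeIncl : DU ⟶ AU where
  f0 _ := false
  f1 a := a.elim
  comm_s a := a.elim
  comm_t a := a.elim
  comm_inv a := a.elim

/-! `D_U`, `A_U` and `V_U` represent the nodes, the half-arcs and the pairs of half-arcs with a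
common source, respectively. A lifting problem against the folding is therefore a pair of half-arcs
issued from one node with the same image, and it is solvable exactly when the two half-arcs agree;
a lifting problem against the node inclusion is a node `x` together with a half-arc issued from
`f x`, and a solution is a half-arc issued from `x` above it. -/

section LocalProperties

variable {X Y : UGraph}

/-- Local injectivity: half-arcs with a common source are separated by `f`. This is the injectivity
half of `IsCovering`, with the subtypes of half-arcs issued from a node unfolded. -/
def IsLocallyInjective (f : X ⟶ Y) : Prop :=
  ∀ ⦃u v : X.half⦄, X.s u = X.s v → f.f1 u = f.f1 v → u = v

/-- Local surjectivity: every half-arc issued from `f x` lifts to one issued from `x`. This is the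
surjectivity half of `IsCovering`, with the subtypes of half-arcs issued from a node unfolded. -/
def IsLocallySurjective (f : X ⟶ Y) : Prop :=
  ∀ ⦃x : X.nodes⦄ ⦃v : Y.half⦄, Y.s v = f.f0 x → ∃ u, X.s u = x ∧ f.f1 u = v

theorem isCovering_iff_isLocallyInjective_and_isLocallySurjective {f : X ⟶ Y} :
    IsCovering f ↔ IsLocallyInjective f ∧ IsLocallySurjective f := by
  constructor
  · refine fun hf ↦ ⟨fun u v hs huv ↦ ?_, fun x v hv ↦ ?_⟩
    · exact congrArg Subtype.val
        ((hf (X.s v)).injective (a₁ := ⟨u, hs⟩) (a₂ := ⟨v, rfl⟩) (Subtype.ext huv))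
    · obtain ⟨⟨u, hu⟩, huv⟩ := (hf x).surjective ⟨v, hv⟩
      exact ⟨u, hu, congrArg Subtype.val huv⟩
  · refine fun ⟨hinj, hsurj⟩ x ↦ ⟨fun u v huv ↦ ?_, fun v ↦ ?_⟩
    · exact Subtype.ext (hinj (u.2.trans v.2.symm) (congrArg Subtype.val huv))
    · obtain ⟨u, hu, huv⟩ := hsurj v.2
      exact ⟨⟨u, hu⟩, Subtype.ext huv⟩

end LocalProperties

namespace UGraph

variable {X Y : UGraph}

theorem t_inv (X : UGraph) (a : X.half) : X.t (X.inv a) = X.s a := by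
  rw [← X.s_inv, X.inv_inv]

theorem f0_congr {g h : X ⟶ Y} (e : g = h) (x : X.nodes) : g.f0 x = h.f0 x :=
  congrFun (congrArg Hom.f0 e) x

theorem f1_congr {g h : X ⟶ Y} (e : g = h) (a : X.half) : g.f1 a = h.f1 a :=
  congrFun (congrArg Hom.f1 e) a

theorem f1_inv_eq_of_f1_eq {g h : X ⟶ Y} {a : X.half} (e : g.f1 a = h.f1 a) :
    g.f1 (X.inv a) = h.f1 (X.inv a) := by
  rw [← g.comm_inv, ← h.comm_inv, e]

theorem hom_ext_of_surjective_s {g h : X ⟶ Y} (hs : Function.Surjective X.s)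
    (e : ∀ a, g.f1 a = h.f1 a) : g = h := by
  refine Hom.ext (funext fun x ↦ ?_) (funext e)
  obtain ⟨a, rfl⟩ := hs x
  rw [← g.comm_s, ← h.comm_s, e]

end UGraph

section Representability

variable {X : UGraph}

/-- The morphism `D_U ⟶ X` classifying a node of `X`. -/
def dotHom (x : X.nodes) : DU ⟶ X where
  f0 _ := x
  f1 a := a.elim
  comm_s a := a.elim
  comm_t a := a.elim
  comm_inv a := a.elim

theorem DU_hom_ext {g h : DU ⟶ X} (e : g.f0 () = h.f0 ()) : g = h :=
  UGraph.Hom.ext (funext fun _ ↦ e) (funext fun a ↦ a.elim)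

/-- The morphism `A_U ⟶ X` classifying a half-arc of `X`, the image of `a₁ = false`. -/
def arcHom (u : X.half) : AU ⟶ X where
  f0 x := bif x then X.t u else X.s u
  f1 a := bif a then X.inv u else u
  comm_s := Bool.rec rfl (X.s_inv u)
  comm_t := Bool.rec rfl (X.t_inv u)
  comm_inv := Bool.rec rfl (X.inv_inv u)

theorem AU_hom_ext {g h : AU ⟶ X} (e : g.f1 false = h.f1 false) : g = h :=
  UGraph.hom_ext_of_surjective_s Function.surjective_id
    (Bool.rec e (UGraph.f1_inv_eq_of_f1_eq e))

/-- The morphism `V_U ⟶ X` classifying two half-arcs of `X` with a common source, the images of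
`b₁ = (0, true)` and `c₁ = (1, true)`. -/
def forkHom (u v : X.half) (hs : X.s u = X.s v) : VU ⟶ X where
  f0 := ![X.s u, X.t u, X.t v]
  f1 a := bif a.2 then ![u, v] a.1 else X.inv (![u, v] a.1)
  comm_s := by
    rintro ⟨j, _ | _⟩ <;> fin_cases j
    exacts [X.s_inv u, X.s_inv v, rfl, hs.symm]
  comm_t := by
    rintro ⟨j, _ | _⟩ <;> fin_cases j
    exacts [X.t_inv u, (X.t_inv v).trans hs.symm, rfl, rfl]
  comm_inv := by
    rintro ⟨j, _ | _⟩
    exacts [X.inv_inv _, rfl]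

theorem VU_surjective_s : Function.Surjective VU.s :=
  Fin.cases ⟨(0, true), rfl⟩ fun j ↦ ⟨(j, false), rfl⟩

theorem VU_hom_ext {g h : VU ⟶ X} (e₀ : g.f1 (0, true) = h.f1 (0, true))
    (e₁ : g.f1 (1, true) = h.f1 (1, true)) : g = h := by
  refine UGraph.hom_ext_of_surjective_s VU_surjective_s ?_
  rintro ⟨j, _ | _⟩ <;> fin_cases j
  exacts [UGraph.f1_inv_eq_of_f1_eq e₀, UGraph.f1_inv_eq_of_f1_eq e₁, e₀, e₁]

end Representability

section Lifting

variable {X Y : UGraph}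

theorem hasLiftingProperty_folding_iff {f : X ⟶ Y} :
    HasLiftingProperty folding f ↔ IsLocallyInjective f := by
  constructor
  · intro _ u v hs huv
    have sq : CommSq (forkHom u v hs) folding f (arcHom (f.f1 u)) :=
      ⟨VU_hom_ext rfl huv.symm⟩
    calc u = sq.lift.f1 false := (UGraph.f1_congr sq.fac_left (0, true)).symm
      _ = v := UGraph.f1_congr sq.fac_left (1, true)
  · refine fun hf ↦ ⟨fun {fork arc} sq ↦ ?_⟩
    have hs : X.s (fork.f1 (0, true)) = X.s (fork.f1 (1, true)) :=
      (fork.comm_s (0, true)).trans (fork.comm_s (1, true)).symm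
    have f1_b : f.f1 (fork.f1 (0, true)) = arc.f1 false := UGraph.f1_congr sq.w (0, true)
    have f1_c : f.f1 (fork.f1 (1, true)) = arc.f1 false := UGraph.f1_congr sq.w (1, true)
    exact .mk' ⟨arcHom (fork.f1 (0, true)), VU_hom_ext rfl (hf hs (f1_b.trans f1_c.symm)),
      AU_hom_ext f1_b⟩

theorem hasLiftingProperty_nodeIncl_iff {f : X ⟶ Y} :
    HasLiftingProperty nodeIncl f ↔ IsLocallySurjective f := by
  constructor
  · intro _ x v hv
    have sq : CommSq (dotHom x) nodeIncl f (arcHom v) := ⟨DU_hom_ext hv.symm⟩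
    have f0_lift : sq.lift.f0 false = x := UGraph.f0_congr sq.fac_left ()
    exact ⟨sq.lift.f1 false, (sq.lift.comm_s false).trans f0_lift,
      UGraph.f1_congr sq.fac_right false⟩
  · refine fun hf ↦ ⟨fun {dot arc} sq ↦ ?_⟩
    have hs : Y.s (arc.f1 false) = f.f0 (dot.f0 ()) :=
      (arc.comm_s false).trans (UGraph.f0_congr sq.w ()).symm
    obtain ⟨u, hu, f1_u⟩ := hf hs
    exact .mk' ⟨arcHom u, DU_hom_ext hu, AU_hom_ext f1_u⟩

end Lifting

/-- a morphism of undirected graphs is a covering if and only if it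
has the right lifting property with respect to the elementary folding `V_U ⟶ A_U`
and to the node inclusion `D_U ⟶ A_U`. -/
theorem stmt_9 {X Y : UGraph} (f : X ⟶ Y) :
    IsCovering f ↔
      (HasLiftingProperty folding f ∧ HasLiftingProperty nodeIncl f) := by
  rw [isCovering_iff_isLocallyInjective_and_isLocallySurjective,
    hasLiftingProperty_folding_iff, hasLiftingProperty_nodeIncl_iff]

end Paper
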